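/- arXiv:2312.08696 — 3 statements merged into one kernel-verified Lean document; each statement's English description precedes it below -/
import Mathlib

section
/- Let a, b : ℝ² → ℝ² be continuously differentiable vector fields with compact support, and let c ∈ ℝ² be a constant vector. Then the Newton-linearized EMAC trilinear term vanishes: b_emac(a,b,c) + b_emac(b,a,c) − b_emac(a,a,c) = 0. -/
open MeasureTheory RealInnerProductSpace

noncomputable section

abbrev E2 := EuclideanSpace ℝ (Fin 2)

/-- divergence of a vector field on ℝ² -/
def dvg (u : E2 → E2) (x : E2) : ℝ :=
  ∑ i, fderiv ℝ u x (EuclideanSpace.single i 1) i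

/-- convective trilinear form  b_conv(u,v,w) = ∫ ((u·∇)v)·w -/
def bConv (u v w : E2 → E2) : ℝ :=
  ∫ x, ⟪fderiv ℝ v x (u x), w x⟫

/-- EMAC trilinear form  b_emac(u,v,w) = ∫ (2D(u)v)·w + (∇·u)(v·w),
where (2D(u)v)·w = (∇u v)·w + (∇u w)·v. -/
def bEmac (u v w : E2 → E2) : ℝ :=
  ∫ x, (⟪fderiv ℝ u x (v x), w x⟫ + ⟪fderiv ℝ u x (w x), v x⟫
    + dvg u x * ⟪v x, w x⟫)

/-- L² norm -/
def l2Norm {F : Type*} [NormedAddCommGroup F] (f : E2 → F) : ℝ :=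
  (∫ x, ‖f x‖ ^ 2) ^ ((1 : ℝ) / 2)

/-- H¹ norm -/
def h1Norm (f : E2 → E2) : ℝ := l2Norm f + l2Norm (fderiv ℝ f)

/-- H² norm -/
def h2Norm (f : E2 → E2) : ℝ :=
  l2Norm f + l2Norm (fderiv ℝ f) + l2Norm (fderiv ℝ (fderiv ℝ f))

/-- rotational field φ(x₁,x₂) = (−x₂, x₁) -/
def phi : E2 → E2 := fun x => (WithLp.equiv 2 (Fin 2 → ℝ)).symm ![-x 1, x 0]

theorem int_fderiv_zero (f : E2 → ℝ) (hf : ContDiff ℝ 1 f) (hc : HasCompactSupport f) (v : E2) :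
    Integrable (fun x => fderiv ℝ f x v) ∧ ∫ x, fderiv ℝ f x v = 0 := by
  have hi : Integrable (fun x => fderiv ℝ f x v) := by
    refine Continuous.integrable_of_hasCompactSupport ?_ (hc.fderiv_apply ℝ v)
    exact (hf.continuous_fderiv (by norm_num)).clm_apply continuous_const
  refine ⟨hi, ?_⟩
  have hf0 := hf.continuous.integrable_of_hasCompactSupport (μ := volume) hc
  have := integral_mul_fderiv_eq_neg_fderiv_mul_of_integrable (μ := (volume : Measure E2))
    (f := fun _ : E2 => (1 : ℝ)) (g := f) (v := v) (by simp) (by simpa using hi)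
    (by simpa using hf0) (fun x _ => by fun_prop)
    (fun x _ => (hf.differentiable (by norm_num)) x)
  simpa using this

theorem emac_integrable (a b : E2 → E2)
    (ha : ContDiff ℝ 1 a) (hb : ContDiff ℝ 1 b) (hcb : HasCompactSupport b) (c : E2) :
    Integrable (fun x => (⟪fderiv ℝ a x (b x), c⟫ + ⟪fderiv ℝ a x c, b x⟫
    + dvg a x * ⟪b x, c⟫)) := by
  have h1 : Continuous (fderiv ℝ a) := ha.continuous_fderiv (by norm_num)
  have h2 := hb.continuous
  refine Continuous.integrable_of_hasCompactSupport ?_ ?_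
  · unfold dvg
    fun_prop
  · refine hcb.mono ?_
    intro x hx hbx
    apply hx
    have : b x = 0 := hbx
    simp [this]

theorem emac_symm (a b : E2 → E2)
    (ha : ContDiff ℝ 1 a) (hb : ContDiff ℝ 1 b)
    (hca : HasCompactSupport a) (hcb : HasCompactSupport b) (c : E2) :
    bEmac a b (fun _ => c) + bEmac b a (fun _ => c) = 0 := by
  unfold bEmac
  rw [← integral_add (emac_integrable a b ha hb hcb c) (emac_integrable b a hb ha hca c)]
  have hai : ∀ i, ContDiff ℝ 1 (fun x => a x i) := fun i => by fun_prop
  have hbi : ∀ i, ContDiff ℝ 1 (fun x => b x i) := fun i => by fun_prop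
  have h0 := int_fderiv_zero (fun x => ⟪a x, b x⟫) (ha.inner ℝ hb)
    (hca.mono (fun x hx h => hx (by have : a x = 0 := h
                                    simp [this]))) c
  have hF := fun i : Fin 2 => int_fderiv_zero (fun x => a x i * ⟪b x, c⟫ + b x i * ⟪a x, c⟫)
    (((hai i).mul (hb.inner ℝ contDiff_const)).add ((hbi i).mul (ha.inner ℝ contDiff_const)))
    (hca.mono (fun x hx h => hx (by have : a x = 0 := h
                                    simp [this]))) (EuclideanSpace.single i 1)
  have key : ∀ x, (⟪fderiv ℝ a x (b x), c⟫ + ⟪fderiv ℝ a x c, b x⟫ + dvg a x * ⟪b x, c⟫)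
      + (⟪fderiv ℝ b x (a x), c⟫ + ⟪fderiv ℝ b x c, a x⟫ + dvg b x * ⟪a x, c⟫)
      = fderiv ℝ (fun x => ⟪a x, b x⟫) x c
        + (fderiv ℝ (fun x => a x 0 * ⟪b x, c⟫ + b x 0 * ⟪a x, c⟫) x (EuclideanSpace.single 0 1)
        + fderiv ℝ (fun x => a x 1 * ⟪b x, c⟫ + b x 1 * ⟪a x, c⟫) x
            (EuclideanSpace.single 1 1)) := by
    intro x
    have dA : DifferentiableAt ℝ a x := ha.differentiable (by norm_num) x
    have dB : DifferentiableAt ℝ b x := hb.differentiable (by norm_num) x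
    have co : ∀ (u : E2 → E2), DifferentiableAt ℝ u x → ∀ i : Fin 2,
        HasFDerivAt (fun y => u y i)
          ((EuclideanSpace.proj i : E2 →L[ℝ] ℝ).comp (fderiv ℝ u x)) x := fun u hu i =>
      (EuclideanSpace.proj i : E2 →L[ℝ] ℝ).hasFDerivAt.comp x hu.hasFDerivAt
    have inn : ∀ (u : E2 → E2), DifferentiableAt ℝ u x →
        HasFDerivAt (fun y => ⟪u y, c⟫) ((innerSL ℝ c).comp (fderiv ℝ u x)) x := fun u hu => by
      have := (innerSL ℝ c).hasFDerivAt.comp x hu.hasFDerivAt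
      refine this.congr_of_eventuallyEq (Filter.Eventually.of_forall fun y => ?_)
      simp [real_inner_comm]
    have e : ∀ i : Fin 2, ∀ v, fderiv ℝ (fun x => a x i * ⟪b x, c⟫ + b x i * ⟪a x, c⟫) x v
        = a x i * ⟪fderiv ℝ b x v, c⟫ + fderiv ℝ a x v i * ⟪b x, c⟫
          + (b x i * ⟪fderiv ℝ a x v, c⟫ + fderiv ℝ b x v i * ⟪a x, c⟫) := fun i v => by
      have := ((co a dA i).mul (inn b dB)).add ((co b dB i).mul (inn a dA))
      have h := congrArg (fun L => L v) this.fderiv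
      refine h.trans ?_
      simp [real_inner_comm c]
      ring
    have dec : ∀ (L : E2 →L[ℝ] E2) (w : E2), L w =
        w 0 • L (EuclideanSpace.single 0 1) + w 1 • L (EuclideanSpace.single 1 1) := by
      intro L w
      rw [← map_smul, ← map_smul, ← map_add]
      congr 1
      ext i
      fin_cases i <;> simp
    rw [e, e, fderiv_inner_apply ℝ dA dB, dec (fderiv ℝ a x) (b x), dec (fderiv ℝ b x) (a x),
      real_inner_comm (fderiv ℝ b x c) (a x)]
    simp only [dvg, Fin.sum_univ_two, inner_add_left, real_inner_smul_left]
    ring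
  simp_rw [key]
  refine (integral_add h0.1 ((hF 0).1.add (hF 1).1)).trans ?_
  have h3 := (integral_add (hF 0).1 (hF 1).1)
  rw [(hF 0).2, (hF 1).2] at h3
  rw [h0.2, zero_add]
  exact h3.trans (add_zero 0)

theorem newton_emac_const_eq_zero
    (a b : E2 → E2)
    (ha : ContDiff ℝ 1 a) (hb : ContDiff ℝ 1 b)
    (hca : HasCompactSupport a) (hcb : HasCompactSupport b)
    (c : E2) :
    bEmac a b (fun _ => c) + bEmac b a (fun _ => c) - bEmac a a (fun _ => c) = 0 := by
  have h1 := emac_symm a b ha hb hca hcb c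
  have h2 := emac_symm a a ha ha hca hca c
  linarith
end
end

section
/- There exists a constant C > 0 such that for all continuously differentiable, compactly supported vector fields a, b : ℝ² → ℝ², |b_emac(a,b,b) + b_emac(b,a,b) − b_emac(a,a,b)| ≤ C ‖a − b‖_{H¹}² ‖b‖_{H¹}. -/
open MeasureTheory RealInnerProductSpace

noncomputable section

def emI (u v w : E2 → E2) (x : E2) : ℝ :=
  ⟪fderiv ℝ u x (v x), w x⟫ + ⟪fderiv ℝ u x (w x), v x⟫ + dvg u x * ⟪v x, w x⟫

lemma dvg_cont {u : E2 → E2} (hu : ContDiff ℝ 1 u) : Continuous (dvg u) := by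
  have h := hu.continuous_fderiv one_ne_zero
  unfold dvg
  refine continuous_finsetSum _ fun i _ => ?_
  have h1 : Continuous fun x => fderiv ℝ u x (EuclideanSpace.single i 1) := by fun_prop
  fun_prop

lemma emI_cont {u v w : E2 → E2} (hu : ContDiff ℝ 1 u) (hv : Continuous v) (hw : Continuous w) :
    Continuous (emI u v w) := by
  have h := hu.continuous_fderiv one_ne_zero
  have h2 := dvg_cont hu
  unfold emI
  have h3 : Continuous fun x => fderiv ℝ u x (v x) := h.clm_apply hv
  have h4 : Continuous fun x => fderiv ℝ u x (w x) := h.clm_apply hw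
  exact ((h3.inner hw).add (h4.inner hv)).add (h2.mul (hv.inner hw))

lemma emI_int {u v w : E2 → E2} (hu : ContDiff ℝ 1 u) (hv : Continuous v) (hw : Continuous w)
    (hc : HasCompactSupport w) : Integrable (emI u v w) := by
  refine (emI_cont hu hv hw).integrable_of_hasCompactSupport (hc.mono ?_)
  intro x hx hx'
  exact hx (by simp [emI, hx'])

lemma cs {f g : E2 → ℝ} (hf : Continuous f) (hg : Continuous g) (hf' : HasCompactSupport f)
    (hg' : HasCompactSupport g) (f0 : ∀ x, 0 ≤ f x) (g0 : ∀ x, 0 ≤ g x) :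
    ∫ x, f x * g x ≤ (∫ x, f x ^ 2) ^ ((1 : ℝ) / 2) * (∫ x, g x ^ 2) ^ ((1 : ℝ) / 2) := by
  have := integral_mul_le_Lp_mul_Lq_of_nonneg (μ := (volume : Measure E2)) (p := 2) (q := 2)
    Real.HolderConjugate.two_two (f := f) (g := g) (.of_forall f0) (.of_forall g0)
    (hf.memLp_of_hasCompactSupport hf') (hg.memLp_of_hasCompactSupport hg')
  simpa using this

lemma fderiv_sq {v : E2 → E2} (hv : ContDiff ℝ 1 v) (x y : E2) :
    fderiv ℝ (fun x => ‖v x‖ ^ 2) x y = 2 * ⟪v x, fderiv ℝ v x y⟫ := by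
  have h := ((hv.differentiable one_ne_zero) x).hasFDerivAt.norm_sq
  rw [h.fderiv]
  simp

lemma lady : ∃ C : ℝ, 0 ≤ C ∧ ∀ v : E2 → E2, ContDiff ℝ 1 v → HasCompactSupport v →
    (∫ x, (‖v x‖ ^ 2) ^ 2) ^ ((1 : ℝ) / 2) ≤ C * (l2Norm v * l2Norm (fderiv ℝ v)) := by
  refine ⟨eLpNormLESNormFDerivOneConst (volume : Measure E2) 2 * 2, by positivity, ?_⟩
  intro v hv hc
  have hu : ContDiff ℝ 1 (fun x => ‖v x‖ ^ 2) := hv.norm_sq ℝ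
  have huc : HasCompactSupport (fun x => ‖v x‖ ^ 2) :=
    hc.mono fun x hx hx' => hx (by simp [hx'])
  have hd := hv.continuous_fderiv one_ne_zero
  have hdc := hc.fderiv (𝕜 := ℝ)
  have hp : NNReal.HolderConjugate (Module.finrank ℝ E2) 2 := by
    simp only [finrank_euclideanSpace, Fintype.card_fin]
    exact_mod_cast NNReal.HolderConjugate.two_two
  have h := eLpNorm_le_eLpNorm_fderiv_one (volume : Measure E2) hu huc hp
  have hduc : Continuous (fderiv ℝ fun x => ‖v x‖ ^ 2) := hu.continuous_fderiv one_ne_zero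
  rw [(hu.continuous.memLp_of_hasCompactSupport huc).eLpNorm_eq_integral_rpow_norm
      (by simp) (by simp),
    (hduc.memLp_of_hasCompactSupport (huc.fderiv (𝕜 := ℝ))).eLpNorm_eq_integral_rpow_norm
      (by simp) (by simp), ← ENNReal.ofReal_coe_nnreal (p := eLpNormLESNormFDerivOneConst _ _), ← ENNReal.ofReal_mul (by positivity),
    ENNReal.ofReal_le_ofReal_iff (by positivity)] at h
  simp at h
  have h2 : ∫ x, ‖fderiv ℝ (fun x => ‖v x‖ ^ 2) x‖ ≤ 2 * (l2Norm v * l2Norm (fderiv ℝ v)) := by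
    calc _ ≤ ∫ x, 2 * (‖v x‖ * ‖fderiv ℝ v x‖) := by
          apply integral_mono
          · exact hduc.norm.integrable_of_hasCompactSupport (huc.fderiv (𝕜 := ℝ)).norm
          · exact (continuous_const.mul (hv.continuous.norm.mul hd.norm)).integrable_of_hasCompactSupport
              (hc.mono fun x hx hx' => hx (by simp [hx']))
          · intro x
            refine ContinuousLinearMap.opNorm_le_bound _ (by positivity) fun y => ?_
            rw [fderiv_sq hv, norm_mul, Real.norm_ofNat, mul_assoc, mul_assoc]
            gcongr
            refine (norm_inner_le_norm _ _).trans ?_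
            gcongr
            exact ContinuousLinearMap.le_opNorm _ _
      _ = 2 * ∫ x, (‖v x‖ * ‖fderiv ℝ v x‖) := integral_const_mul _ _
      _ ≤ _ := by
          gcongr
          exact cs hv.continuous.norm hd.norm hc.norm hdc.norm (fun _ => norm_nonneg _)
            (fun _ => norm_nonneg _)
  rw [mul_assoc]
  refine le_trans ?_ (mul_le_mul_of_nonneg_left h2 (by positivity))
  simpa using h

lemma emI_bbb {b : E2 → E2} (hb : ContDiff ℝ 1 b) (hc : HasCompactSupport b) :
    ∫ x, emI b b b x = 0 := by
  have hu : ContDiff ℝ 1 (fun x => ‖b x‖ ^ 2) := hb.norm_sq ℝ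
  have huc : HasCompactSupport (fun x => ‖b x‖ ^ 2) :=
    hc.mono fun x hx hx' => hx (by simp [hx'])
  have hd := hb.continuous_fderiv one_ne_zero
  have hdu := hu.continuous_fderiv one_ne_zero
  have hbi : ∀ i, ContDiff ℝ 1 (fun x => b x i) := fun i => by fun_prop
  have hfi : ∀ i x y, fderiv ℝ (fun x => b x i) x y = fderiv ℝ b x y i := by
    intro i x y
    have := ((EuclideanSpace.proj i : E2 →L[ℝ] ℝ).hasFDerivAt.comp x
      ((hb.differentiable one_ne_zero) x).hasFDerivAt)
    have h2 := this.fderiv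
    change fderiv ℝ (fun x => b x i) x = _ at h2
    rw [h2]; rfl
  have c1 : ∀ i, Continuous fun x => fderiv ℝ (fun x => b x i) x (EuclideanSpace.single i 1) :=
    fun i => ((hbi i).continuous_fderiv one_ne_zero).clm_apply continuous_const
  have c2 : ∀ i : Fin 2, Continuous fun x => fderiv ℝ (fun x => ‖b x‖ ^ 2) x (EuclideanSpace.single i 1) :=
    fun i => hdu.clm_apply continuous_const
  have i1 : ∀ i, Integrable fun x => fderiv ℝ (fun x => b x i) x (EuclideanSpace.single i 1) * ‖b x‖ ^ 2 :=
    fun i => ((c1 i).mul hu.continuous).integrable_of_hasCompactSupport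
      (hc.mono fun x hx hx' => hx (by simp [hx']))
  have i2 : ∀ i, Integrable fun x => b x i * fderiv ℝ (fun x => ‖b x‖ ^ 2) x (EuclideanSpace.single i 1) :=
    fun i => ((hbi i).continuous.mul (c2 i)).integrable_of_hasCompactSupport
      (hc.mono fun x hx hx' => hx (by simp [hx']))
  have i3 : ∀ i, Integrable fun x => b x i * ‖b x‖ ^ 2 :=
    fun i => ((hbi i).continuous.mul hu.continuous).integrable_of_hasCompactSupport
      (hc.mono fun x hx hx' => hx (by simp [hx']))
  have key := fun i => integral_mul_fderiv_eq_neg_fderiv_mul_of_integrable (i1 i) (i2 i) (i3 i)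
    (fun x _ => (hbi i).differentiable one_ne_zero x) (fun x _ => hu.differentiable one_ne_zero x)
  have e : emI b b b = fun x => ∑ i, (b x i * fderiv ℝ (fun x => ‖b x‖ ^ 2) x (EuclideanSpace.single i 1)
      + fderiv ℝ (fun x => b x i) x (EuclideanSpace.single i 1) * ‖b x‖ ^ 2) := by
    funext x
    have hx : b x = ∑ i, b x i • EuclideanSpace.single i (1 : ℝ) := by
      ext j; fin_cases j <;> simp
    have h3 : ∑ i, b x i * fderiv ℝ (fun x => ‖b x‖ ^ 2) x (EuclideanSpace.single i 1)
        = 2 * ⟪b x, fderiv ℝ b x (b x)⟫ := by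
      rw [← fderiv_sq hb]
      conv_rhs => rw [hx]
      simp only [map_sum, map_smul, smul_eq_mul]
    rw [Finset.sum_add_distrib, h3, ← Finset.sum_mul]
    simp only [emI, dvg, hfi, real_inner_self_eq_norm_sq, real_inner_comm]
    ring
  rw [e]
  refine (integral_finsetSum _ fun i _ => (i2 i).add (i1 i)).trans ?_
  refine Finset.sum_eq_zero fun i _ => ?_
  refine (integral_add (i2 i) (i1 i)).trans ?_
  rw [key i]
  ring

lemma emI_bd (u v w : E2 → E2) (x : E2) :
    ‖emI u v w x‖ ≤ 4 * (‖fderiv ℝ u x‖ * (‖v x‖ * ‖w x‖)) := by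
  have h1 : ‖(⟪fderiv ℝ u x (v x), w x⟫ : ℝ)‖ ≤ ‖fderiv ℝ u x‖ * ‖v x‖ * ‖w x‖ :=
    (norm_inner_le_norm _ _).trans (by gcongr; exact ContinuousLinearMap.le_opNorm _ _)
  have h2 : ‖(⟪fderiv ℝ u x (w x), v x⟫ : ℝ)‖ ≤ ‖fderiv ℝ u x‖ * ‖w x‖ * ‖v x‖ :=
    (norm_inner_le_norm _ _).trans (by gcongr; exact ContinuousLinearMap.le_opNorm _ _)
  have h3 : ‖dvg u x‖ ≤ 2 * ‖fderiv ℝ u x‖ := by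
    unfold dvg
    refine (norm_sum_le _ _).trans ?_
    have : ∀ i ∈ (Finset.univ : Finset (Fin 2)),
        ‖fderiv ℝ u x (EuclideanSpace.single i 1) i‖ ≤ ‖fderiv ℝ u x‖ := fun i _ => by
      refine (PiLp.norm_apply_le _ i).trans ?_
      refine (ContinuousLinearMap.le_opNorm _ _).trans ?_
      simp
    refine (Finset.sum_le_sum this).trans ?_
    simp
  have h4 : ‖dvg u x * ⟪v x, w x⟫‖ ≤ 2 * ‖fderiv ℝ u x‖ * (‖v x‖ * ‖w x‖) := by
    rw [norm_mul]
    gcongr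
    exact norm_inner_le_norm _ _
  refine (norm_add₃_le).trans ?_
  linarith

lemma l2_nonneg {F : Type*} [NormedAddCommGroup F] (f : E2 → F) : 0 ≤ l2Norm f := by
  unfold l2Norm; positivity

theorem newton_emac_energy_bound
    : ∃ C : ℝ, 0 < C ∧ ∀ a b : E2 → E2,
      ContDiff ℝ 1 a → ContDiff ℝ 1 b →
      HasCompactSupport a → HasCompactSupport b →
      |bEmac a b b + bEmac b a b - bEmac a a b|
        ≤ C * h1Norm (fun x => a x - b x) ^ 2 * h1Norm b := by
  obtain ⟨C, hC, lad⟩ := lady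
  refine ⟨4 * C + 1, by positivity, fun a b ha hb hac hbc => ?_⟩
  set e : E2 → E2 := fun x => a x - b x with he
  have hec : ContDiff ℝ 1 e := ha.sub hb
  have hes : HasCompactSupport e := hac.sub hbc
  have hde := hec.continuous_fderiv one_ne_zero
  have hfe : ∀ x, fderiv ℝ e x = fderiv ℝ a x - fderiv ℝ b x := fun x =>
    fderiv_fun_sub (ha.differentiable one_ne_zero x) (hb.differentiable one_ne_zero x)
  have id1 : bEmac a b b + bEmac b a b - bEmac a a b = - ∫ x, emI e e b x := by
    have j1 := emI_int ha hb.continuous hb.continuous hbc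
    have j2 := emI_int hb ha.continuous hb.continuous hbc
    have j3 := emI_int ha ha.continuous hb.continuous hbc
    have j4 := emI_int hb hb.continuous hb.continuous hbc
    have j5 := emI_int hec hec.continuous hb.continuous hbc
    have : ∫ x, (emI a b b x + emI b a b x - emI a a b x) = ∫ x, (emI b b b x - emI e e b x) := by
      congr 1
      funext x
      have hx : e x = a x - b x := rfl
      simp only [emI, dvg, hfe, hx, sub_apply, map_sub, inner_sub_left,
        inner_sub_right, PiLp.sub_apply, Finset.sum_sub_distrib]
      ring
    have q1 : ∫ x, (emI a b b x + emI b a b x - emI a a b x)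
        = (∫ x, (emI a b b x + emI b a b x)) - ∫ x, emI a a b x := integral_sub (j1.add j2) j3
    rw [q1, integral_add j1 j2, integral_sub j4 j5, emI_bbb hb hbc, zero_sub] at this
    exact this
  rw [id1, abs_neg]
  have n1 := l2_nonneg e
  have n2 := l2_nonneg b
  have n3 := l2_nonneg (fderiv ℝ e)
  have n4 := l2_nonneg (fderiv ℝ b)
  have s1 : |∫ x, emI e e b x| ≤ 4 * ∫ x, ‖fderiv ℝ e x‖ * (‖e x‖ * ‖b x‖) := by
    rw [← integral_const_mul]
    refine norm_integral_le_of_norm_le ?_ (.of_forall fun x => emI_bd e e b x)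
    exact (continuous_const.mul (hde.norm.mul (hec.continuous.norm.mul
      hb.continuous.norm))).integrable_of_hasCompactSupport
      (hbc.mono fun x hx hx' => hx (by simp [hx']))
  have s2 : ∫ x, ‖fderiv ℝ e x‖ * (‖e x‖ * ‖b x‖) ≤
      l2Norm (fderiv ℝ e) * (∫ x, (‖e x‖ * ‖b x‖) ^ 2) ^ ((1 : ℝ) / 2) :=
    cs hde.norm (hec.continuous.norm.mul hb.continuous.norm) (hes.fderiv (𝕜 := ℝ)).norm
      (hbc.mono fun x hx hx' => hx (by simp [hx'])) (fun _ => by positivity)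
      (fun _ => by positivity)
  have s3 : ∫ x, (‖e x‖ * ‖b x‖) ^ 2 ≤ (C * (l2Norm e * l2Norm (fderiv ℝ e)))
      * (C * (l2Norm b * l2Norm (fderiv ℝ b))) := by
    simp_rw [mul_pow]
    refine (cs (f := fun x => ‖e x‖ ^ 2) (g := fun x => ‖b x‖ ^ 2) (hec.continuous.norm.pow 2) (hb.continuous.norm.pow 2)
      (hes.mono fun x hx hx' => hx (by simp [hx']))
      (hbc.mono fun x hx hx' => hx (by simp [hx'])) (fun _ => by positivity)
      (fun _ => by positivity)).trans ?_
    have := lad e hec hes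
    have := lad b hb hbc
    gcongr
  have s4 : (∫ x, (‖e x‖ * ‖b x‖) ^ 2) ^ ((1 : ℝ) / 2) ≤ C * (h1Norm e * h1Norm b) := by
    rw [← Real.sqrt_eq_rpow]
    refine Real.sqrt_le_iff.2 ⟨by unfold h1Norm; positivity, s3.trans ?_⟩
    have t1 : l2Norm e * l2Norm (fderiv ℝ e) ≤ h1Norm e ^ 2 := by unfold h1Norm; nlinarith
    have t2 : l2Norm b * l2Norm (fderiv ℝ b) ≤ h1Norm b ^ 2 := by unfold h1Norm; nlinarith
    calc _ ≤ (C * h1Norm e ^ 2) * (C * h1Norm b ^ 2) := by gcongr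
      _ = _ := by ring
  have m1 : 0 ≤ h1Norm e := by unfold h1Norm; positivity
  have m2 : 0 ≤ h1Norm b := by unfold h1Norm; positivity
  have m3 : l2Norm (fderiv ℝ e) ≤ h1Norm e := by unfold h1Norm; linarith
  calc _ ≤ 4 * (h1Norm e * (C * (h1Norm e * h1Norm b))) := by
        refine s1.trans ?_
        gcongr
        refine s2.trans ?_
        gcongr
    _ ≤ _ := by
        have : 0 ≤ h1Norm e ^ 2 * h1Norm b := by positivity
        nlinarith
end
end

section
/- There exists a constant C > 0 such that for all compactly supported vector fields u, w : ℝ² → ℝ² with u twice continuously differentiable and w continuously differentiable, |b_emac(u,u,w)| ≤ C ‖u − w‖_{L²} ‖u‖_{H²} ‖w‖_{H¹}. -/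
open MeasureTheory RealInnerProductSpace

noncomputable section

lemma aux_int {f : E2 → ℝ} (hf : Continuous f) (h : HasCompactSupport f) :
    Integrable f := hf.integrable_of_hasCompactSupport h

lemma aux_cs {f g : E2 → ℝ} (hf : Continuous f) (hg : Continuous g)
    (hcf : HasCompactSupport f) (hcg : HasCompactSupport g) :
    (∫ x, f x * g x) ^ 2 ≤ (∫ x, f x ^ 2) * ∫ x, g x ^ 2 := by
  have i1 : Integrable (fun x => f x ^ 2) := aux_int (by fun_prop)
    (hcf.comp_left (g := fun t : ℝ => t ^ 2) (by norm_num))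
  have i2 : Integrable (fun x => g x ^ 2) := aux_int (by fun_prop)
    (hcg.comp_left (g := fun t : ℝ => t ^ 2) (by norm_num))
  have i3 : Integrable (fun x => f x * g x) := aux_int (by fun_prop) hcf.mul_right
  have key : ∀ t : ℝ, 0 ≤ (∫ x, f x ^ 2) * (t * t) + (2 * ∫ x, f x * g x) * t + ∫ x, g x ^ 2 := by
    intro t
    have : ∫ x, (t * f x + g x) ^ 2 =
        (∫ x, f x ^ 2) * (t * t) + (2 * ∫ x, f x * g x) * t + ∫ x, g x ^ 2 := by
      have e : (fun x => (t * f x + g x) ^ 2) =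
          fun x => (t * t) * f x ^ 2 + (2 * t) * (f x * g x) + g x ^ 2 := by
        ext x; ring
      rw [e, integral_add, integral_add, integral_const_mul, integral_const_mul]
      · ring
      · exact i1.const_mul _
      · exact i3.const_mul _
      · exact (i1.const_mul _).add (i3.const_mul _)
      · exact i2
    rw [← this]
    exact integral_nonneg fun x => sq_nonneg _
  have := discrim_le_zero key
  unfold discrim at this
  nlinarith

lemma aux_lady : ∃ K : ℝ, 0 ≤ K ∧ ∀ g : E2 → E2, ContDiff ℝ 1 g → HasCompactSupport g →
    ∫ x, (‖g x‖ ^ 2) ^ 2 ≤ K * ((∫ x, ‖g x‖ ^ 2) * ∫ x, ‖fderiv ℝ g x‖ ^ 2) := by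
  set K : ℝ := (lintegralPowLePowLIntegralFDerivConst (volume : Measure E2) 2 : ℝ) with hK
  have hK0 : 0 ≤ K := NNReal.coe_nonneg _
  refine ⟨K * 4, by positivity, fun g hg hc => ?_⟩
  have hD : Continuous (fderiv ℝ g) := hg.continuous_fderiv one_ne_zero
  have hcD : HasCompactSupport (fderiv ℝ g) := hc.fderiv ℝ
  have hgc := hg.continuous
  set f : E2 → ℝ := fun x => ‖g x‖ ^ 2 with hf
  have hfC : ContDiff ℝ 1 f := hg.norm_sq ℝ
  have hfc : HasCompactSupport f :=
    hc.comp_left (g := fun t : E2 => ‖t‖ ^ 2) (by norm_num)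
  have hp : Real.HolderConjugate (Module.finrank ℝ E2) 2 := by
    simp only [finrank_euclideanSpace, Fintype.card_fin]
    exact_mod_cast Real.HolderConjugate.two_two
  have h := lintegral_pow_le_pow_lintegral_fderiv (volume : Measure E2) hfC hfc hp
  have iDf : Integrable (fderiv ℝ f) :=
    (hfC.continuous_fderiv one_ne_zero).integrable_of_hasCompactSupport (hfc.fderiv ℝ)
  have if2 : Integrable (fun x => f x ^ 2) := aux_int (by fun_prop)
    (hfc.comp_left (g := fun t : ℝ => t ^ 2) (by norm_num))
  have h1 : ∫⁻ x, ‖f x‖ₑ ^ (2:ℝ) = ENNReal.ofReal (∫ x, f x ^ 2) := by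
    rw [ofReal_integral_eq_lintegral_ofReal if2 (ae_of_all _ fun x => sq_nonneg _)]
    congr 1; ext x
    rw [← ofReal_norm, ENNReal.ofReal_rpow_of_nonneg (norm_nonneg _) (by norm_num)]
    congr 1
    rw [Real.rpow_two, Real.norm_eq_abs, sq_abs]
  have h2 : ∫⁻ x, ‖fderiv ℝ f x‖ₑ = ENNReal.ofReal (∫ x, ‖fderiv ℝ f x‖) :=
    (ofReal_integral_norm_eq_lintegral_enorm iDf).symm
  have n0 : 0 ≤ ∫ x, ‖fderiv ℝ f x‖ := integral_nonneg fun x => norm_nonneg _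
  rw [h1, h2, ENNReal.ofReal_rpow_of_nonneg n0 (by norm_num), ← ENNReal.ofReal_coe_nnreal,
    ← ENNReal.ofReal_mul (NNReal.coe_nonneg _), ENNReal.ofReal_le_ofReal_iff (by positivity),
    ← hK, Real.rpow_two] at h
  have h3 : ∫ x, ‖fderiv ℝ f x‖ ≤ 2 * ∫ x, ‖g x‖ * ‖fderiv ℝ g x‖ := by
    rw [← integral_const_mul]
    refine integral_mono iDf.norm ?_ fun x => ?_
    · exact aux_int (by fun_prop) ((hc.norm.mul_right (f' := fun x => ‖fderiv ℝ g x‖)).mul_left (f := fun _ => 2))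
    · have hd : HasFDerivAt f (2 • (innerSL ℝ (g x)).comp (fderiv ℝ g x)) x :=
        ((hg.differentiable one_ne_zero) x).hasFDerivAt.norm_sq
      rw [hd.fderiv]
      refine ContinuousLinearMap.opNorm_le_bound _ (by positivity) fun v => ?_
      simp only [smul_apply, ContinuousLinearMap.comp_apply, innerSL_apply_apply,
        nsmul_eq_mul, Nat.cast_ofNat, Real.norm_eq_abs, abs_mul, abs_two]
      have a := abs_real_inner_le_norm (g x) (fderiv ℝ g x v)
      have b := (fderiv ℝ g x).le_opNorm v
      have := mul_le_mul_of_nonneg_left b (norm_nonneg (g x))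
      nlinarith
  have h4 := aux_cs hgc.norm hD.norm hc.norm hcD.norm
  have h5 : (∫ x, ‖fderiv ℝ f x‖) ^ 2 ≤ (2 * ∫ x, ‖g x‖ * ‖fderiv ℝ g x‖) ^ 2 := by gcongr
  calc _ ≤ _ := h
    _ ≤ K * (4 * ((∫ x, ‖g x‖ ^ 2) * ∫ x, ‖fderiv ℝ g x‖ ^ 2)) := by
      gcongr; nlinarith
    _ = _ := by ring

/-- basis vector -/
abbrev aux_e (i : Fin 2) : E2 := EuclideanSpace.single i 1

lemma aux_e_norm (i : Fin 2) : ‖aux_e i‖ = 1 := by simp [aux_e]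

lemma aux_decomp (v : E2) : v = ∑ i, v i • aux_e i := by
  ext j; fin_cases j <;> simp [aux_e]

lemma aux_op (L : E2 →L[ℝ] E2) : ‖L‖ ≤ ∑ i, ‖L (aux_e i)‖ := by
  refine ContinuousLinearMap.opNorm_le_bound _ (by positivity) fun v => ?_
  conv_lhs => rw [aux_decomp v]
  rw [map_sum, Finset.sum_mul]
  refine (norm_sum_le _ _).trans (Finset.sum_le_sum fun i _ => ?_)
  rw [map_smul, norm_smul, mul_comm]
  gcongr
  exact PiLp.norm_apply_le v i

lemma aux_op_sq (L : E2 →L[ℝ] E2) : ‖L‖ ^ 2 ≤ 2 * (‖L (aux_e 0)‖ ^ 2 + ‖L (aux_e 1)‖ ^ 2) := by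
  have := aux_op L
  rw [Fin.sum_univ_two] at this
  have h2 : ‖L‖ ^ 2 ≤ (‖L (aux_e 0)‖ + ‖L (aux_e 1)‖) ^ 2 := by gcongr
  nlinarith [sq_nonneg (‖L (aux_e 0)‖ - ‖L (aux_e 1)‖)]

lemma aux_le (L : E2 →L[ℝ] E2) (i : Fin 2) : ‖L (aux_e i)‖ ≤ ‖L‖ := by
  simpa [aux_e_norm] using L.le_opNorm (aux_e i)

lemma aux_skew (u : E2 → E2) (hu : ContDiff ℝ 1 u) (hc : HasCompactSupport u) :
    bEmac u u u = 0 := by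
  have hD : Continuous (fderiv ℝ u) := hu.continuous_fderiv one_ne_zero
  have huc := hu.continuous
  have hud : Differentiable ℝ u := hu.differentiable one_ne_zero
  have hfC : ContDiff ℝ 1 (fun x => ‖u x‖ ^ 2) := hu.norm_sq ℝ
  have hfd := hfC.differentiable one_ne_zero
  have hDf := hfC.continuous_fderiv one_ne_zero
  have hfc : HasCompactSupport (fun x => ‖u x‖ ^ 2) :=
    hc.comp_left (g := fun t : E2 => ‖t‖ ^ 2) (by norm_num)
  have hci : ∀ i, HasCompactSupport (fun x => u x i) := fun i =>
    hc.comp_left (g := fun t : E2 => t i) (by simp)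
  have hdi : ∀ i x, HasFDerivAt (fun x => u x i)
      ((EuclideanSpace.proj i : E2 →L[ℝ] ℝ).comp (fderiv ℝ u x)) x := fun i x =>
    (EuclideanSpace.proj i : E2 →L[ℝ] ℝ).hasFDerivAt.comp x (hud x).hasFDerivAt
  have hfi : ∀ i x, fderiv ℝ (fun x => u x i) x (aux_e i) = fderiv ℝ u x (aux_e i) i := by
    intro i x; rw [(hdi i x).fderiv]; simp
  have hff : ∀ i x, fderiv ℝ (fun x => ‖u x‖ ^ 2) x (aux_e i)
      = 2 * ⟪u x, fderiv ℝ u x (aux_e i)⟫ := by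
    intro i x; rw [(hud x).hasFDerivAt.norm_sq.fderiv]; simp
  have I1 : ∀ i, Integrable (fun x => (2 * ⟪u x, fderiv ℝ u x (aux_e i)⟫) * u x i) := fun i =>
    aux_int (by fun_prop) (hci i).mul_left
  have I2 : ∀ i, Integrable (fun x => ‖u x‖ ^ 2 * fderiv ℝ u x (aux_e i) i) := fun i =>
    aux_int (by fun_prop) hfc.mul_right
  have key : ∀ i, ∫ x, ‖u x‖ ^ 2 * fderiv ℝ u x (aux_e i) i
      = - ∫ x, (2 * ⟪u x, fderiv ℝ u x (aux_e i)⟫) * u x i := by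
    intro i
    have := integral_mul_fderiv_eq_neg_fderiv_mul_of_integrable (μ := (volume : Measure E2))
      (f := fun x => ‖u x‖ ^ 2) (g := fun x => u x i) (v := aux_e i)
      (by simp only [hff]; exact I1 i) (by simp only [hfi]; exact I2 i)
      (aux_int (by fun_prop) hfc.mul_right)
      (fun x _ => hfd x) (fun x _ => (hdi i x).differentiableAt)
    simpa only [hff, hfi] using this
  have e : ∀ x, (⟪fderiv ℝ u x (u x), u x⟫ + ⟪fderiv ℝ u x (u x), u x⟫
    + dvg u x * ⟪u x, u x⟫) = (∑ i, ‖u x‖ ^ 2 * fderiv ℝ u x (aux_e i) i) +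
      ∑ i, (2 * ⟪u x, fderiv ℝ u x (aux_e i)⟫) * u x i := by
    intro x
    have : fderiv ℝ u x (u x) = ∑ i, u x i • fderiv ℝ u x (aux_e i) := by
      conv_lhs => rw [aux_decomp (u x)]
      rw [map_sum]; simp only [map_smul]
    rw [this, real_inner_self_eq_norm_sq, dvg]
    simp only [Fin.sum_univ_two, inner_add_left, real_inner_smul_left]
    rw [real_inner_comm (u x) (fderiv ℝ u x (aux_e 0)), real_inner_comm (u x) (fderiv ℝ u x (aux_e 1))]
    ring
  unfold bEmac
  simp only [e]
  rw [integral_add (integrable_finsetSum _ fun i _ => I2 i) (integrable_finsetSum _ fun i _ => I1 i),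
    integral_finsetSum _ fun i _ => I2 i, integral_finsetSum _ fun i _ => I1 i, ← Finset.sum_add_distrib]
  simp [key]

/-- pointwise norm -/
def aux_nm {F : Type*} [NormedAddCommGroup F] (f : E2 → F) (x : E2) : ℝ := ‖f x‖

lemma aux_nm_cont {F : Type*} [NormedAddCommGroup F] {f : E2 → F} (hf : Continuous f) :
    Continuous (aux_nm f) := hf.norm

lemma aux_nm_supp {F : Type*} [NormedAddCommGroup F] {f : E2 → F} (hf : HasCompactSupport f) :
    HasCompactSupport (aux_nm f) := hf.norm

lemma aux_nm_clm {F : Type*} [NormedAddCommGroup F] [NormedSpace ℝ F] (f : E2 → E2 →L[ℝ] F)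
    (x v : E2) : ‖f x v‖ ≤ aux_nm f x * ‖v‖ := (f x).le_opNorm v

lemma aux_nm_nonneg {F : Type*} [NormedAddCommGroup F] (f : E2 → F) (x : E2) :
    0 ≤ aux_nm f x := norm_nonneg _

lemma aux_nm_sq {F : Type*} [NormedAddCommGroup F] {f : E2 → F} (hf : Continuous f)
    (h : HasCompactSupport f) : Integrable (fun x => aux_nm f x ^ 2) :=
  aux_int (by have := aux_nm_cont hf; fun_prop)
    (h.comp_left (g := fun t : F => ‖t‖ ^ 2) (by simp))

lemma aux_sq_int {F : Type*} [NormedAddCommGroup F] {f : E2 → F} (hf : Continuous f)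
    (h : HasCompactSupport f) : Integrable (fun x => ‖f x‖ ^ 2) :=
  aux_int (by fun_prop) (h.comp_left (g := fun t : F => ‖t‖ ^ 2) (by simp))

lemma aux_form_int (u v w : E2 → E2) (hu : ContDiff ℝ 1 u) (hc : HasCompactSupport u)
    (hv : Continuous v) (hw : Continuous w) :
    Integrable (fun x => (⟪fderiv ℝ u x (v x), w x⟫ + ⟪fderiv ℝ u x (w x), v x⟫
    + dvg u x * ⟪v x, w x⟫)) := by
  have hD : Continuous (fderiv ℝ u) := hu.continuous_fderiv one_ne_zero
  refine aux_int (by unfold dvg; fun_prop) ?_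
  refine (hc.fderiv ℝ).mono ?_
  intro x hx
  rw [Function.mem_support] at hx ⊢
  contrapose! hx
  simp [hx, dvg]

lemma aux_b (u v w : E2 → E2) (hu : ContDiff ℝ 1 u) (hc : HasCompactSupport u)
    (hv : Continuous v) (hw : Continuous w) (hcw : HasCompactSupport w) :
    (bEmac u v w) ^ 2 ≤ 16 * (∫ x, (‖fderiv ℝ u x‖ * ‖v x‖) ^ 2) * ∫ x, ‖w x‖ ^ 2 := by
  have hD : Continuous (fderiv ℝ u) := hu.continuous_fderiv one_ne_zero
  have hcD : HasCompactSupport (fderiv ℝ u) := hc.fderiv ℝ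
  have hi := aux_form_int u v w hu hc hv hw
  have h1 : |bEmac u v w| ≤ 4 * ∫ x, (‖fderiv ℝ u x‖ * ‖v x‖) * ‖w x‖ := by
    unfold bEmac
    refine abs_integral_le_integral_abs.trans ?_
    rw [← integral_const_mul]
    refine integral_mono hi.abs ?_ fun x => ?_
    · exact aux_int (by fun_prop) ((hcw.norm.mul_left).mul_left (f := fun _ => 4))
    · dsimp only
      set L := fderiv ℝ u x with hL
      have a1 : |⟪L (v x), w x⟫| ≤ ‖L‖ * ‖v x‖ * ‖w x‖ :=
        (abs_real_inner_le_norm _ _).trans (by gcongr; exact L.le_opNorm _)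
      have a2 : |⟪L (w x), v x⟫| ≤ ‖L‖ * ‖w x‖ * ‖v x‖ :=
        (abs_real_inner_le_norm _ _).trans (by gcongr; exact L.le_opNorm _)
      have a3 : |⟪v x, w x⟫| ≤ ‖v x‖ * ‖w x‖ := abs_real_inner_le_norm _ _
      have a4 : |dvg u x| ≤ 2 * ‖L‖ := by
        unfold dvg
        rw [Fin.sum_univ_two]
        have b : ∀ i, |(L (aux_e i)) i| ≤ ‖L‖ := fun i =>
          (PiLp.norm_apply_le (L (aux_e i)) i).trans (aux_le L i)
        have := abs_add_le ((L (aux_e 0)) 0) ((L (aux_e 1)) 1)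
        linarith [b 0, b 1]
      have a5 : |dvg u x * ⟪v x, w x⟫| ≤ 2 * ‖L‖ * (‖v x‖ * ‖w x‖) := by
        rw [abs_mul]; gcongr
      refine (abs_add_le _ _).trans ?_
      have := abs_add_le ⟪L (v x), w x⟫ ⟪L (w x), v x⟫
      nlinarith
  have h2 := aux_cs (f := fun x => ‖fderiv ℝ u x‖ * ‖v x‖) (g := fun x => ‖w x‖)
    (by fun_prop) (by fun_prop) hcD.norm.mul_right hcw.norm
  have h3 := pow_le_pow_left₀ (abs_nonneg _) h1 2
  rw [sq_abs] at h3
  nlinarith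

lemma aux_symm (u v w : E2 → E2) : bEmac u v w = bEmac u w v := by
  unfold bEmac
  congr 1; ext x
  rw [real_inner_comm (v x) (w x)]; ring

lemma aux_sub (u w : E2 → E2) (hu : ContDiff ℝ 1 u) (hc : HasCompactSupport u)
    (hw : Continuous w) : bEmac u u w = - bEmac u u (fun x => u x - w x) := by
  have h0 := aux_skew u hu hc
  have huc := hu.continuous
  have : bEmac u u (fun x => u x - w x) = bEmac u u u - bEmac u u w := by
    unfold bEmac
    rw [← integral_sub (aux_form_int u u u hu hc huc huc) (aux_form_int u u w hu hc huc hw)]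
    congr 1; ext x
    simp only [inner_sub_right, map_sub, inner_sub_left]
    ring
  rw [this, h0]; ring

lemma aux_prod {K : ℝ} (hK : ∀ g : E2 → E2, ContDiff ℝ 1 g → HasCompactSupport g →
    ∫ x, (‖g x‖ ^ 2) ^ 2 ≤ K * ((∫ x, ‖g x‖ ^ 2) * ∫ x, ‖fderiv ℝ g x‖ ^ 2))
    (g v : E2 → E2) (hg : ContDiff ℝ 1 g) (hcg : HasCompactSupport g)
    (hv : ContDiff ℝ 1 v) (hcv : HasCompactSupport v) :
    (∫ x, (‖g x‖ * ‖v x‖) ^ 2) ^ 2 ≤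
      (K * ((∫ x, ‖g x‖ ^ 2) * ∫ x, ‖fderiv ℝ g x‖ ^ 2)) *
      (K * ((∫ x, ‖v x‖ ^ 2) * ∫ x, ‖fderiv ℝ v x‖ ^ 2)) := by
  have c1 := hg.continuous
  have c2 := hv.continuous
  have := aux_cs (f := fun x => ‖g x‖ ^ 2) (g := fun x => ‖v x‖ ^ 2)
    (by fun_prop) (by fun_prop)
    (hcg.comp_left (g := fun t : E2 => ‖t‖ ^ 2) (by norm_num))
    (hcv.comp_left (g := fun t : E2 => ‖t‖ ^ 2) (by norm_num))
  simp only [mul_pow] at this ⊢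
  refine this.trans ?_
  have h1 := hK g hg hcg
  have h2 := hK v hv hcv
  exact mul_le_mul h1 h2 (integral_nonneg fun x => by positivity)
    ((integral_nonneg fun x => by positivity).trans h1)

section
variable (u : E2 → E2) (hu : ContDiff ℝ 2 u) (hc : HasCompactSupport u)

lemma aux_g_contDiff (hu : ContDiff ℝ 2 u) (i : Fin 2) :
    ContDiff ℝ 1 (fun x => fderiv ℝ u x (aux_e i)) := by
  have : ContDiff ℝ 1 (fderiv ℝ u) := hu.fderiv_right (by norm_num)
  fun_prop

lemma aux_g_supp (hc : HasCompactSupport u) (i : Fin 2) :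
    HasCompactSupport (fun x => fderiv ℝ u x (aux_e i)) :=
  (hc.fderiv ℝ).comp_left (g := fun L : E2 →L[ℝ] E2 => L (aux_e i)) (by simp)

lemma aux_g_fderiv (hu : ContDiff ℝ 2 u) (i : Fin 2) (x : E2) :
    ‖fderiv ℝ (fun x => fderiv ℝ u x (aux_e i)) x‖ ≤ aux_nm (fderiv ℝ (fderiv ℝ u)) x := by
  have h1 : ContDiff ℝ 1 (fderiv ℝ u) := hu.fderiv_right (by norm_num)
  have h2 : HasFDerivAt (fderiv ℝ u) (fderiv ℝ (fderiv ℝ u) x) x :=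
    (h1.differentiable one_ne_zero x).hasFDerivAt
  have h3 : ∀ v, fderiv ℝ (fun x => fderiv ℝ u x (aux_e i)) x v
      = fderiv ℝ (fderiv ℝ u) x v (aux_e i) := by
    intro v
    rw [(h2.clm_apply (hasFDerivAt_const (aux_e i) x)).fderiv]
    simp
  refine ContinuousLinearMap.opNorm_le_bound _ (aux_nm_nonneg _ _) fun v => ?_
  rw [h3]
  exact (aux_le _ i).trans (aux_nm_clm _ x v)

lemma aux_interp (hu : ContDiff ℝ 2 u) (hc : HasCompactSupport u) (i : Fin 2) :
    (∫ x, ‖fderiv ℝ u x (aux_e i)‖ ^ 2) ^ 2 ≤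
      (∫ x, ‖u x‖ ^ 2) * ∫ x, aux_nm (fderiv ℝ (fderiv ℝ u)) x ^ 2 := by
  have hg := aux_g_contDiff u hu i
  have hcg := aux_g_supp u hc i
  have h1 : ContDiff ℝ 1 (fderiv ℝ u) := hu.fderiv_right (by norm_num)
  have hDD : Continuous (fderiv ℝ (fderiv ℝ u)) := h1.continuous_fderiv one_ne_zero
  have hcDD : HasCompactSupport (fderiv ℝ (fderiv ℝ u)) := (hc.fderiv ℝ).fderiv ℝ
  have huc := hu.continuous
  have hud := hu.differentiable two_ne_zero
  set g : E2 → E2 := fun x => fderiv ℝ u x (aux_e i) with hgdef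
  have hgc := hg.continuous
  have hgd := hg.differentiable one_ne_zero
  have hDg : Continuous (fderiv ℝ g) := hg.continuous_fderiv one_ne_zero
  have I0 : Integrable (fun x => ⟪g x, g x⟫) := by
    simp only [real_inner_self_eq_norm_sq]; exact aux_sq_int hgc hcg
  have I1 : Integrable (fun x => ⟪u x, fderiv ℝ g x (aux_e i)⟫) :=
    aux_int (by fun_prop) (hc.mono (by
      intro x hx; rw [Function.mem_support] at hx ⊢; contrapose! hx; simp [hx]))
  have I2 : Integrable (fun x => ⟪u x, g x⟫) :=
    aux_int (by fun_prop) (hc.mono (by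
      intro x hx; rw [Function.mem_support] at hx ⊢; contrapose! hx; simp [hx]))
  have ibp := integral_bilinear_fderiv_right_eq_neg_left_of_integrable
    (μ := (volume : Measure E2)) (f := u) (g := g) (v := aux_e i) (B := innerSL ℝ)
    I0 I1 I2 (fun x _ => hud x) (fun x _ => hgd x)
  change ∫ x, ⟪u x, fderiv ℝ g x (aux_e i)⟫ = - ∫ x, ⟪g x, g x⟫ at ibp
  have e : ∫ x, ‖g x‖ ^ 2 = - ∫ x, ⟪u x, fderiv ℝ g x (aux_e i)⟫ := by
    rw [ibp, neg_neg]
    simp only [real_inner_self_eq_norm_sq]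
  have h2 : ∫ x, ‖g x‖ ^ 2 ≤ ∫ x, ‖u x‖ * aux_nm (fderiv ℝ (fderiv ℝ u)) x := by
    rw [e]
    refine (neg_le_abs _).trans (abs_integral_le_integral_abs.trans ?_)
    refine integral_mono I1.abs (aux_int (huc.norm.mul (aux_nm_cont hDD)) hc.norm.mul_right) fun x => ?_
    refine (abs_real_inner_le_norm _ _).trans ?_
    refine mul_le_mul_of_nonneg_left ?_ (norm_nonneg _)
    exact (aux_le _ i).trans (aux_g_fderiv u hu i x)
  refine (pow_le_pow_left₀ (integral_nonneg fun x => by positivity) h2 2).trans ?_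
  exact aux_cs huc.norm (aux_nm_cont hDD) hc.norm (aux_nm_supp hcDD)

lemma aux_split (hu : ContDiff ℝ 2 u) (hc : HasCompactSupport u) (v : E2 → E2)
    (hv : Continuous v) :
    ∫ x, (‖fderiv ℝ u x‖ * ‖v x‖) ^ 2 ≤ 2 * ((∫ x, (‖fderiv ℝ u x (aux_e 0)‖ * ‖v x‖) ^ 2)
      + ∫ x, (‖fderiv ℝ u x (aux_e 1)‖ * ‖v x‖) ^ 2) := by
  have hD : Continuous (fderiv ℝ u) := hu.continuous_fderiv two_ne_zero
  have I : ∀ i, Integrable (fun x => (‖fderiv ℝ u x (aux_e i)‖ * ‖v x‖) ^ 2) := fun i => by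
    simp only [mul_pow]
    exact aux_int (by fun_prop) (HasCompactSupport.mul_right
      ((aux_g_supp u hc i).comp_left (g := fun t : E2 => ‖t‖ ^ 2) (by norm_num)))
  rw [← integral_add (I 0) (I 1), ← integral_const_mul]
  refine integral_mono ?_ (((I 0).add (I 1)).const_mul _) fun x => ?_
  · simp only [mul_pow]
    exact aux_int (by fun_prop) (HasCompactSupport.mul_right
      ((hc.fderiv ℝ).comp_left (g := fun t : E2 →L[ℝ] E2 => ‖t‖ ^ 2) (by norm_num)))
  · have := mul_le_mul_of_nonneg_right (aux_op_sq (fderiv ℝ u x)) (sq_nonneg ‖v x‖)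
    simp only [mul_pow]
    linarith

end

lemma aux_l2 {F : Type*} [NormedAddCommGroup F] (f : E2 → F) :
    0 ≤ l2Norm f ∧ ∫ x, ‖f x‖ ^ 2 = l2Norm f ^ 2 := by
  have h : 0 ≤ ∫ x, ‖f x‖ ^ 2 := integral_nonneg fun x => by positivity
  unfold l2Norm
  rw [← Real.sqrt_eq_rpow]
  exact ⟨Real.sqrt_nonneg _, (Real.sq_sqrt h).symm⟩

lemma aux_l2' {F : Type*} [NormedAddCommGroup F] (f : E2 → F) :
    0 ≤ l2Norm f ∧ ∫ x, aux_nm f x ^ 2 = l2Norm f ^ 2 := aux_l2 f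

theorem bEmac_bound_diff_l2_h2_h1
    : ∃ C : ℝ, 0 < C ∧ ∀ u w : E2 → E2,
      ContDiff ℝ 2 u → ContDiff ℝ 1 w →
      HasCompactSupport u → HasCompactSupport w →
      |bEmac u u w| ≤ C * l2Norm (fun x => u x - w x) * h2Norm u * h1Norm w := by
  obtain ⟨K, hK0, hK⟩ := aux_lady
  refine ⟨Real.sqrt (16 * (8 * K) * 4) + 1, by positivity, fun u w hu hw hcu hcw => ?_⟩
  have hu1 : ContDiff ℝ 1 u := hu.of_le (by norm_num)
  have huc := hu.continuous
  have hwc := hw.continuous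
  have h1 : ContDiff ℝ 1 (fderiv ℝ u) := hu.fderiv_right (by norm_num)
  have hD : Continuous (fderiv ℝ u) := h1.continuous
  have hcD : HasCompactSupport (fderiv ℝ u) := hcu.fderiv ℝ
  have hDD : Continuous (fderiv ℝ (fderiv ℝ u)) := h1.continuous_fderiv one_ne_zero
  have hcDD : HasCompactSupport (fderiv ℝ (fderiv ℝ u)) := (hcu.fderiv ℝ).fderiv ℝ
  set e : E2 → E2 := fun x => u x - w x with he
  have hec : Continuous e := by fun_prop
  have hce : HasCompactSupport e := hcu.sub hcw
  obtain ⟨a0, A0⟩ := aux_l2 u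
  obtain ⟨a1, A1⟩ := aux_l2 (fderiv ℝ u)
  obtain ⟨a2, A2⟩ := aux_l2' (fderiv ℝ (fderiv ℝ u))
  obtain ⟨w0, W0⟩ := aux_l2 w
  obtain ⟨w1, W1⟩ := aux_l2 (fderiv ℝ w)
  obtain ⟨e0, EE0⟩ := aux_l2 e
  have hh2 : h2Norm u = l2Norm u + l2Norm (fderiv ℝ u) + l2Norm (fderiv ℝ (fderiv ℝ u)) := rfl
  have hh1 : h1Norm w = l2Norm w + l2Norm (fderiv ℝ w) := rfl
  -- triangle inequality
  have tri : l2Norm u ^ 2 ≤ 2 * (l2Norm e ^ 2 + l2Norm w ^ 2) := by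
    rw [← A0, ← EE0, ← W0, ← integral_add (aux_sq_int hec hce) (aux_sq_int hwc hcw),
      ← integral_const_mul]
    refine integral_mono (aux_sq_int huc hcu)
      (((aux_sq_int hec hce).add (aux_sq_int hwc hcw)).const_mul _) fun x => ?_
    have h : ‖u x‖ ≤ ‖e x‖ + ‖w x‖ := by
      have := norm_add_le (e x) (w x)
      simpa [he] using this
    have h' := pow_le_pow_left₀ (norm_nonneg _) h 2
    dsimp only
    nlinarith [sq_nonneg (‖e x‖ - ‖w x‖)]
  -- bounds on g i
  have gn : ∀ i, 0 ≤ ∫ x, ‖fderiv ℝ u x (aux_e i)‖ ^ 2 := fun i =>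
    integral_nonneg fun x => by positivity
  have gsq := fun i => aux_sq_int (aux_g_contDiff u hu i).continuous (aux_g_supp u hcu i)
  have gD : ∀ i, ∫ x, ‖fderiv ℝ (fun x => fderiv ℝ u x (aux_e i)) x‖ ^ 2
      ≤ l2Norm (fderiv ℝ (fderiv ℝ u)) ^ 2 := fun i => by
    rw [← A2]
    refine integral_mono
      (aux_sq_int ((aux_g_contDiff u hu i).continuous_fderiv one_ne_zero)
        ((aux_g_supp u hcu i).fderiv ℝ)) (aux_nm_sq hDD hcDD) fun x => ?_
    have := aux_g_fderiv u hu i x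
    dsimp only
    gcongr
  have g1 : ∀ i, ∫ x, ‖fderiv ℝ u x (aux_e i)‖ ^ 2 ≤ l2Norm (fderiv ℝ u) ^ 2 := fun i => by
    rw [← A1]
    refine integral_mono (gsq i) (aux_sq_int hD hcD) fun x => ?_
    have := aux_le (fderiv ℝ u x) i
    dsimp only
    gcongr
  have g2 : ∀ i, ∫ x, ‖fderiv ℝ u x (aux_e i)‖ ^ 2 ≤
      l2Norm u * l2Norm (fderiv ℝ (fderiv ℝ u)) := fun i => by
    have := aux_interp u hu hcu i
    rw [A0, A2, ← mul_pow] at this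
    exact le_of_sq_le_sq this (by positivity)
  have D2 : l2Norm (fderiv ℝ u) ^ 2 ≤ 4 * (l2Norm u * l2Norm (fderiv ℝ (fderiv ℝ u))) := by
    have : l2Norm (fderiv ℝ u) ^ 2 ≤ 2 * ((∫ x, ‖fderiv ℝ u x (aux_e 0)‖ ^ 2)
        + ∫ x, ‖fderiv ℝ u x (aux_e 1)‖ ^ 2) := by
      rw [← A1, ← integral_add (gsq 0) (gsq 1), ← integral_const_mul]
      exact integral_mono (aux_sq_int hD hcD) (((gsq 0).add (gsq 1)).const_mul _)
        fun x => aux_op_sq _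
    linarith [g2 0, g2 1]
  have m : (bEmac u u w) ^ 2 ≤ (16 * (8 * K) * 4) * (l2Norm e * h2Norm u * h1Norm w) ^ 2 := by
    by_cases hcase : l2Norm u ^ 2 ≤ 4 * l2Norm w ^ 2
    · have p : ∀ i, ∫ x, (‖fderiv ℝ u x (aux_e i)‖ * ‖u x‖) ^ 2 ≤
          2 * K * (l2Norm u ^ 2 * l2Norm (fderiv ℝ (fderiv ℝ u)) ^ 2) := fun i => by
        have := aux_prod hK _ u (aux_g_contDiff u hu i) (aux_g_supp u hcu i) hu1 hcu
        refine le_of_sq_le_sq (this.trans ?_) (by positivity)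
        rw [A0, A1]
        calc _ ≤ (K * ((l2Norm u * l2Norm (fderiv ℝ (fderiv ℝ u))) *
              l2Norm (fderiv ℝ (fderiv ℝ u)) ^ 2)) *
              (K * (l2Norm u ^ 2 * (4 * (l2Norm u * l2Norm (fderiv ℝ (fderiv ℝ u)))))) := by
              gcongr
              · exact g2 i
              · exact gD i
          _ = _ := by ring
      have s := aux_split u hu hcu u huc
      have b := aux_b u u e hu1 hcu huc hec hce
      rw [aux_sub u w hu1 hcu hwc, neg_sq]
      refine b.trans ?_
      rw [EE0]
      have s' : ∫ x, (‖fderiv ℝ u x‖ * ‖u x‖) ^ 2 ≤ 8 * K * 4 * (h1Norm w ^ 2 * h2Norm u ^ 2) := by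
        calc _ ≤ 8 * K * (l2Norm u ^ 2 * l2Norm (fderiv ℝ (fderiv ℝ u)) ^ 2) := by
              linarith [p 0, p 1]
          _ ≤ 8 * K * ((4 * h1Norm w ^ 2) * h2Norm u ^ 2) := by
              have q1 : l2Norm w ≤ h1Norm w := by linarith
              have q2 : l2Norm (fderiv ℝ (fderiv ℝ u)) ≤ h2Norm u := by linarith
              have q3 : l2Norm u ^ 2 ≤ 4 * h1Norm w ^ 2 := hcase.trans (by gcongr)
              gcongr
          _ = _ := by ring
      calc _ ≤ 16 * (8 * K * 4 * (h1Norm w ^ 2 * h2Norm u ^ 2)) * l2Norm e ^ 2 := by gcongr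
        _ = _ := by ring
    · have hcase' : l2Norm u ^ 2 ≤ 4 * l2Norm e ^ 2 := by linarith
      have q1 : l2Norm w ≤ h1Norm w := by linarith
      have q1' : l2Norm (fderiv ℝ w) ≤ h1Norm w := by linarith
      have q2 : l2Norm (fderiv ℝ (fderiv ℝ u)) ≤ h2Norm u := by linarith
      have q2' : l2Norm (fderiv ℝ u) ≤ h2Norm u := by linarith
      have r1 : 0 ≤ h1Norm w := by linarith
      have r2 : 0 ≤ h2Norm u := by linarith
      have p : ∀ i, ∫ x, (‖fderiv ℝ u x (aux_e i)‖ * ‖w x‖) ^ 2 ≤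
          K * (h2Norm u ^ 2 * h1Norm w ^ 2) := fun i => by
        have := aux_prod hK _ w (aux_g_contDiff u hu i) (aux_g_supp u hcu i) hw hcw
        refine le_of_sq_le_sq (this.trans ?_) (by positivity)
        rw [W0, W1]
        calc _ ≤ (K * (h2Norm u ^ 2 * h2Norm u ^ 2)) * (K * (h1Norm w ^ 2 * h1Norm w ^ 2)) := by
              gcongr
              · exact (g1 i).trans (by gcongr)
              · exact (gD i).trans (by gcongr)
          _ = _ := by ring
      have s := aux_split u hu hcu w hwc
      have b := aux_b u w u hu1 hcu hwc huc hcu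
      rw [aux_symm]
      refine b.trans ?_
      rw [A0]
      have s' : ∫ x, (‖fderiv ℝ u x‖ * ‖w x‖) ^ 2 ≤ 8 * K * (h2Norm u ^ 2 * h1Norm w ^ 2) := by
        have : 0 ≤ K * (h2Norm u ^ 2 * h1Norm w ^ 2) := by positivity
        linarith [p 0, p 1]
      calc _ ≤ 16 * (8 * K * (h2Norm u ^ 2 * h1Norm w ^ 2)) * (4 * l2Norm e ^ 2) := by gcongr
        _ = _ := by ring
  have r : 0 ≤ l2Norm e * h2Norm u * h1Norm w := by
    have : 0 ≤ h2Norm u := by linarith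
    have : 0 ≤ h1Norm w := by linarith
    positivity
  have f := Real.sqrt_le_sqrt m
  rw [Real.sqrt_sq_eq_abs, Real.sqrt_mul (by positivity), Real.sqrt_sq r] at f
  refine f.trans ?_
  nlinarith
end
end
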